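/- Assume S is infinite. For every real number a ∈ [0,1] there exist simplicial complexes 𝒦₁ ⊆ 𝒦₂ over S with d(𝒦₁, 𝒦₂) = a. (Concretely, given pairwise disjoint finite subsets S₁, S₂, … of S with |Sₙ| = qₙ and integers 1 ≤ pₙ ≤ qₙ, the complexes 𝒦₁ = ⋃ₙ 𝒫*_{≤ qₙ−pₙ}(Sₙ) and 𝒦₂ = ⋃ₙ 𝒫*_f(Sₙ) satisfy d(𝒦₁, 𝒦₂) = supₙ pₙ/qₙ.) -/

import Mathlib

open scoped BigOperators

/-- A simplicial complex over the vertex set `S`: a nonempty collection of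
nonempty finite subsets of `S`, closed under taking nonempty subsets. -/
def IsSimplicialComplex {S : Type*} (K : Set (Finset S)) : Prop :=
  K.Nonempty ∧ (∀ F ∈ K, F.Nonempty) ∧
    ∀ F ∈ K, ∀ G : Finset S, G.Nonempty → G ⊆ F → G ∈ K

/-- Halved ℓ¹ distance between finitely supported real functions:
`d(α,β) = (1/2) ∑ₛ |α s - β s|`. -/
noncomputable def l1dist {S : Type*} (α β : S →₀ ℝ) : ℝ :=
  (1 / 2) * (α - β).sum fun _ x => |x|

/-- The ℓ¹ geometric realization of a collection `K` of finite subsets of `S`: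
finitely supported probability vectors whose support is a face of `K`. -/
def realization {S : Type*} (K : Set (Finset S)) : Set (S →₀ ℝ) :=
  {α | (∀ s, 0 ≤ α s) ∧ (α.sum fun _ x => x) = 1 ∧ α.support ∈ K}

/-- Distance from a point to a set of finitely supported functions. -/
noncomputable def distToSet {S : Type*} (α : S →₀ ℝ) (X : Set (S →₀ ℝ)) : ℝ :=
  sInf (l1dist α '' X)

/-- One-sided Hausdorff distance between (the realizations of) two complexes. -/
noncomputable def hdelta {S : Type*} (K₁ K₂ : Set (Finset S)) : ℝ :=
  sSup ((fun α => distToSet α (realization K₂)) '' realization K₁)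

/-- Hausdorff distance between (the realizations of) two simplicial complexes. -/
noncomputable def hdist {S : Type*} (K₁ K₂ : Set (Finset S)) : ℝ :=
  max (hdelta K₁ K₂) (hdelta K₂ K₁)

/-- `d(F, K)`: supremum of distances to `|K|₁` over probability vectors
supported exactly on `F`. -/
noncomputable def dFace {S : Type*} (F : Finset S) (K : Set (Finset S)) : ℝ :=
  sSup ((fun α => distToSet α (realization K)) ''
    {α : S →₀ ℝ | (∀ s, 0 ≤ α s) ∧ (α.sum fun _ x => x) = 1 ∧ α.support = F})

/-- The `n`-skeleton of a simplicial complex. -/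
def skeleton {S : Type*} (n : ℕ) (K : Set (Finset S)) : Set (Finset S) :=
  {F | F ∈ K ∧ F.card ≤ n + 1}

/-!
Two probability vectors `w`, `v` satisfy `d(w, v) = 1 - ∑ min (w s) (v s)`. Hence the distance from
`w` to the realization of a complex `K` is governed by the mass `w` can put on a face of `K`: no
point supported on a face `G` is closer than `1 - w(G)`, and conditioning `w` on `G` attains this
value. Among the `k`-element subsets of an `n`-element set carrying `w`, the best one has mass at
least `k / n`, and the uniform vector does no better. With `k = q - p` and `n = q` on disjoint
blocks, the Hausdorff distance is the supremum of the ratios `p / q`, and `p = ⌊a m⌋`, `q = m + 1`,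
`m = 0, 1, …`, realize any `a ∈ [0, 1]`.
-/

open Convexity Finset Filter Topology Function

section Mean

variable {α 𝕜 : Type*} [Field 𝕜] [LinearOrder 𝕜] [IsStrictOrderedRing 𝕜]

lemma exists_mem_expect_le_expect_erase [DecidableEq α] (f : α → 𝕜) {T : Finset α}
    (hT : T.Nontrivial) : ∃ m ∈ T, 𝔼 s ∈ T, f s ≤ 𝔼 s ∈ T.erase m, f s := by
  obtain ⟨m, hm, hmin⟩ := T.exists_min_image f hT.nonempty
  have min_le : f m ≤ 𝔼 s ∈ T.erase m, f s :=
    le_expect hT.erase_nonempty fun s hs => hmin s (mem_of_mem_erase hs)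
  have card_erase : (#(T.erase m) : 𝕜) + 1 = #T := by
    exact_mod_cast card_erase_add_one hm
  have card_pos : (0 : 𝕜) < #T := by exact_mod_cast hT.nonempty.card_pos
  refine ⟨m, hm, ?_⟩
  rw [expect_eq_sum_div_card, div_le_iff₀' card_pos, ← add_sum_erase T f hm,
    ← card_mul_expect, ← card_erase]
  linarith

lemma exists_subset_card_eq_expect_le (f : α → 𝕜) {T : Finset α} {k : ℕ} (hk : 0 < k)
    (hkT : k ≤ #T) : ∃ G ⊆ T, #G = k ∧ 𝔼 s ∈ T, f s ≤ 𝔼 s ∈ G, f s := by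
  classical
  induction T using Finset.strongInduction with
  | H T ih =>
    rcases hkT.eq_or_lt with rfl | hlt
    · exact ⟨T, Subset.rfl, rfl, le_rfl⟩
    · have nontrivial : T.Nontrivial := one_lt_card_iff_nontrivial.mp (by lia)
      obtain ⟨m, hm, hle⟩ := exists_mem_expect_le_expect_erase f nontrivial
      obtain ⟨G, hG, hcard, hle'⟩ :=
        ih _ (erase_ssubset hm) (by rw [card_erase_of_mem hm]; lia)
      exact ⟨G, hG.trans (erase_subset _ _), hcard, hle.trans hle'⟩

end Mean

section ProbabilityVectors

variable {S : Type*} {w v : StdSimplex ℝ S} {T G : Finset S}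

lemma sum_weights_of_support_subset (hT : w.weights.support ⊆ T) : ∑ s ∈ T, w.weights s = 1 := by
  rw [← w.total, Finsupp.sum_of_support_subset _ hT _ fun _ _ => rfl]

lemma l1dist_eq_sum_of_support_subset {α β : S →₀ ℝ} (hα : α.support ⊆ T) (hβ : β.support ⊆ T) :
    l1dist α β = 1 / 2 * ∑ s ∈ T, |α s - β s| := by
  classical
  rw [l1dist, Finsupp.sum_of_support_subset (s := T) _
    (Finsupp.support_sub.trans (union_subset hα hβ)) _ fun _ _ => abs_zero]
  rfl

lemma l1dist_nonneg (α β : S →₀ ℝ) : 0 ≤ l1dist α β :=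
  mul_nonneg (by norm_num) (sum_nonneg fun _ _ => abs_nonneg _)

lemma l1dist_self (α : S →₀ ℝ) : l1dist α α = 0 := by
  simp [l1dist]

lemma l1dist_weights_eq_one_sub_sum_min (hT : v.weights.support ⊆ T) :
    l1dist w.weights v.weights = 1 - ∑ s ∈ T, min (w.weights s) (v.weights s) := by
  classical
  have hw : w.weights.support ⊆ w.weights.support ∪ T := subset_union_left
  have hTU : T ⊆ w.weights.support ∪ T := subset_union_right
  have hv := hT.trans hTU
  have sum_min : ∑ s ∈ T, min (w.weights s) (v.weights s) =
      ∑ s ∈ w.weights.support ∪ T, min (w.weights s) (v.weights s) := by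
    refine sum_subset hTU fun s _ hs => ?_
    rw [Finsupp.notMem_support_iff.mp fun h => hs (hT h)]
    exact min_eq_right (w.nonneg s)
  have abs_sub_eq (a b : ℝ) : |a - b| = a + b - 2 * min a b := by
    linarith [max_sub_min_eq_abs' a b, min_add_max a b]
  rw [l1dist_eq_sum_of_support_subset hw hv, sum_min]
  simp only [abs_sub_eq, sum_sub_distrib, sum_add_distrib, ← mul_sum,
    sum_weights_of_support_subset hw, sum_weights_of_support_subset hv]
  ring

lemma l1dist_weights_le_one (w v : StdSimplex ℝ S) : l1dist w.weights v.weights ≤ 1 := by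
  rw [l1dist_weights_eq_one_sub_sum_min Subset.rfl]
  exact sub_le_self _ (sum_nonneg fun s _ => le_min (w.nonneg s) (v.nonneg s))

lemma one_sub_sum_support_le_l1dist (w v : StdSimplex ℝ S) :
    1 - ∑ s ∈ v.weights.support, w.weights s ≤ l1dist w.weights v.weights := by
  rw [l1dist_weights_eq_one_sub_sum_min Subset.rfl]
  gcongr
  exact min_le_left _ _

lemma support_restrict_subset (h : ∃ s ∈ (G : Set S), w.weights s ≠ 0) :
    (w.restrict G h).weights.support ⊆ G := by
  classical
  rw [StdSimplex.support_weights_restrict]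
  exact fun s hs => (mem_filter.mp hs).2

lemma weights_le_weights_restrict (h : ∃ s ∈ (G : Set S), w.weights s ≠ 0) {s : S} (hs : s ∈ G) :
    w.weights s ≤ (w.restrict G h).weights s := by
  classical
  set mass := (w.weights.filter (· ∈ (G : Set S))).sum fun _ x => x with hmass
  have mass_eq : mass = ∑ t ∈ w.weights.support with t ∈ G, w.weights t := by
    simp [hmass, Finsupp.sum_filter_index]
  have mass_le_one : mass ≤ 1 := by
    rw [mass_eq, ← sum_weights_of_support_subset (w := w) Subset.rfl]
    exact sum_le_sum_of_subset_of_nonneg (filter_subset _ _) fun t _ _ => w.nonneg t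
  have mass_pos : 0 < mass := by
    obtain ⟨t, ht, ht₀⟩ := h
    rw [mass_eq]
    exact sum_pos' (fun t _ => w.nonneg t)
      ⟨t, by simpa using ⟨ht₀, ht⟩, (w.nonneg t).lt_of_ne' ht₀⟩
  have restrict_eq : (w.restrict G h).weights s = mass⁻¹ * w.weights s := by
    simp [StdSimplex.weights_restrict, hmass, hs]
  rw [restrict_eq]
  exact le_mul_of_one_le_left (w.nonneg s) ((one_le_inv₀ mass_pos).mpr mass_le_one)

lemma l1dist_weights_restrict (h : ∃ s ∈ (G : Set S), w.weights s ≠ 0) :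
    l1dist w.weights (w.restrict G h).weights = 1 - ∑ s ∈ G, w.weights s := by
  rw [l1dist_weights_eq_one_sub_sum_min (support_restrict_subset h),
    sum_congr rfl fun s hs => min_eq_left (weights_le_weights_restrict h hs)]

lemma exists_subset_card_eq_div_card_le_sum_weights (hT : w.weights.support ⊆ T) {k : ℕ}
    (hk : 0 < k) (hkT : k ≤ #T) : ∃ G ⊆ T, #G = k ∧ (k / #T : ℝ) ≤ ∑ s ∈ G, w.weights s := by
  obtain ⟨G, hG, hcard, hle⟩ := exists_subset_card_eq_expect_le w.weights hk hkT
  refine ⟨G, hG, hcard, ?_⟩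
  rw [expect_eq_sum_div_card, sum_weights_of_support_subset hT] at hle
  rw [← card_mul_expect, hcard, ← mul_one_div]
  gcongr

/-- The uniform probability vector on a nonempty finite set; among the points of
the simplex on `T`, it is at maximal distance from every skeleton. -/
noncomputable def uniformStdSimplex (T : Finset S) (hT : T.Nonempty) : StdSimplex ℝ S where
  weights := Finsupp.indicator T fun _ _ => (#T : ℝ)⁻¹
  nonneg s := by
    classical
    rw [Finsupp.indicator_apply]
    split_ifs <;> simp
  total := by
    have card_ne_zero : (#T : ℝ) ≠ 0 := by exact_mod_cast hT.card_ne_zero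
    simp [card_ne_zero]

lemma support_uniformStdSimplex_subset (hT : T.Nonempty) :
    (uniformStdSimplex T hT).weights.support ⊆ T :=
  Finsupp.support_indicator_subset _ _

lemma sum_weights_uniformStdSimplex [DecidableEq S] (hT : T.Nonempty) (G : Finset S) :
    ∑ s ∈ G, (uniformStdSimplex T hT).weights s = #(G ∩ T) / #T := by
  simp [uniformStdSimplex, Finsupp.indicator_apply, sum_ite_mem, div_eq_mul_inv]

end ProbabilityVectors

section Realization

variable {S : Type*} {K K₁ K₂ : Set (Finset S)} {w : StdSimplex ℝ S}

lemma weights_mem_realization (hw : w.weights.support ∈ K) : w.weights ∈ realization K :=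
  ⟨w.nonneg, w.total, hw⟩

lemma exists_weights_eq_of_mem_realization {α : S →₀ ℝ} (hα : α ∈ realization K) :
    ∃ w : StdSimplex ℝ S, w.weights.support ∈ K ∧ w.weights = α :=
  ⟨⟨α, hα.1, hα.2.1⟩, hα.2.2, rfl⟩

lemma distToSet_nonneg (α : S →₀ ℝ) (X : Set (S →₀ ℝ)) : 0 ≤ distToSet α X :=
  Real.sInf_nonneg (Set.forall_mem_image.mpr fun β _ => l1dist_nonneg α β)

lemma distToSet_le_l1dist (α : S →₀ ℝ) {β : S →₀ ℝ} {X : Set (S →₀ ℝ)} (hβ : β ∈ X) :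
    distToSet α X ≤ l1dist α β :=
  csInf_le ⟨0, Set.forall_mem_image.mpr fun β _ => l1dist_nonneg α β⟩ ⟨β, hβ, rfl⟩

lemma distToSet_realization_le_one (w : StdSimplex ℝ S) (K : Set (Finset S)) :
    distToSet w.weights (realization K) ≤ 1 := by
  rcases (realization K).eq_empty_or_nonempty with hK | ⟨_, hβ⟩
  · simp [distToSet, hK]
  · obtain ⟨v, _, rfl⟩ := exists_weights_eq_of_mem_realization hβ
    exact (distToSet_le_l1dist _ hβ).trans (l1dist_weights_le_one w v)

lemma IsSimplicialComplex.realization_nonempty (hK : IsSimplicialComplex K) :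
    (realization K).Nonempty := by
  obtain ⟨⟨F, hF⟩, hne, hdown⟩ := hK
  obtain ⟨s, hs⟩ := hne F hF
  refine ⟨_, weights_mem_realization (w := .single s) ?_⟩
  rw [StdSimplex.support_weights_eq_singleton.mpr rfl]
  exact hdown F hF _ (singleton_nonempty s) (singleton_subset_iff.mpr hs)

lemma IsSimplicialComplex.distToSet_realization_le (hK : IsSimplicialComplex K) {G : Finset S}
    (hG : G ∈ K) (w : StdSimplex ℝ S) :
    distToSet w.weights (realization K) ≤ 1 - ∑ s ∈ G, w.weights s := by
  by_cases h : ∃ s ∈ (G : Set S), w.weights s ≠ 0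
  · rw [← l1dist_weights_restrict h]
    refine distToSet_le_l1dist _ (weights_mem_realization ?_)
    exact hK.2.2 G hG _ (StdSimplex.support_weights_nonempty _) (support_restrict_subset h)
  · push Not at h
    rw [sum_eq_zero h, sub_zero]
    exact distToSet_realization_le_one w K

lemma IsSimplicialComplex.one_sub_le_distToSet_realization (hK : IsSimplicialComplex K) {c : ℝ}
    (hc : ∀ G ∈ K, ∑ s ∈ G, w.weights s ≤ c) : 1 - c ≤ distToSet w.weights (realization K) := by
  refine le_csInf (hK.realization_nonempty.image _) (Set.forall_mem_image.mpr fun β hβ => ?_)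
  obtain ⟨v, hv, rfl⟩ := exists_weights_eq_of_mem_realization hβ
  exact (sub_le_sub_left (hc _ hv) 1).trans (one_sub_sum_support_le_l1dist w v)

lemma distToSet_le_hdelta (hw : w.weights.support ∈ K₁) :
    distToSet w.weights (realization K₂) ≤ hdelta K₁ K₂ := by
  refine le_csSup ⟨1, Set.forall_mem_image.mpr fun α hα => ?_⟩
    ⟨_, weights_mem_realization hw, rfl⟩
  obtain ⟨v, _, rfl⟩ := exists_weights_eq_of_mem_realization hα
  exact distToSet_realization_le_one v K₂

lemma hdelta_le {c : ℝ} (hc₀ : 0 ≤ c) (hc : ∀ w : StdSimplex ℝ S, w.weights.support ∈ K₁ →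
    distToSet w.weights (realization K₂) ≤ c) : hdelta K₁ K₂ ≤ c := by
  refine Real.sSup_le (Set.forall_mem_image.mpr fun α hα => ?_) hc₀
  obtain ⟨w, hw, rfl⟩ := exists_weights_eq_of_mem_realization hα
  exact hc w hw

lemma hdelta_nonneg (K₁ K₂ : Set (Finset S)) : 0 ≤ hdelta K₁ K₂ :=
  Real.sSup_nonneg (Set.forall_mem_image.mpr fun α _ => distToSet_nonneg α _)

lemma hdist_eq_hdelta_of_subset (h : K₁ ⊆ K₂) : hdist K₁ K₂ = hdelta K₂ K₁ := by
  refine max_eq_right (le_trans (hdelta_le le_rfl fun w hw => ?_) (hdelta_nonneg K₂ K₁))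
  rw [← l1dist_self w.weights]
  exact distToSet_le_l1dist _ (weights_mem_realization (h hw))

end Realization

section BlockComplex

variable {S ι : Type*} {T : ι → Finset S} {k k' : ι → ℕ}

/-- The complex `⋃ i, 𝒫*_{≤ k i}(T i)`, whose faces are the nonempty subsets of a block `T i` with
at most `k i` elements. Taking `k i = #(T i)` gives `⋃ i, 𝒫*_f(T i)`. -/
def blockComplex (T : ι → Finset S) (k : ι → ℕ) : Set (Finset S) :=
  {F | ∃ i, F.Nonempty ∧ F ⊆ T i ∧ #F ≤ k i}

lemma blockComplex_card (T : ι → Finset S) :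
    blockComplex T (fun i => #(T i)) = {F | ∃ i, F.Nonempty ∧ F ⊆ T i} := by
  ext F
  exact exists_congr fun i =>
    ⟨fun h => ⟨h.1, h.2.1⟩, fun h => ⟨h.1, h.2, card_le_card h.2⟩⟩

lemma blockComplex_mono (h : k ≤ k') : blockComplex T k ⊆ blockComplex T k' :=
  fun _ ⟨i, hne, hsub, hcard⟩ => ⟨i, hne, hsub, hcard.trans (h i)⟩

lemma isSimplicialComplex_blockComplex {i : ι} (hT : (T i).Nonempty) (hk : 0 < k i) :
    IsSimplicialComplex (blockComplex T k) := by
  refine ⟨?_, fun F ⟨_, hne, _⟩ => hne, fun F ⟨j, _, hsub, hcard⟩ G hG hGF =>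
    ⟨j, hG, hGF.trans hsub, (card_le_card hGF).trans hcard⟩⟩
  obtain ⟨s, hs⟩ := hT
  exact ⟨{s}, i, singleton_nonempty s, singleton_subset_iff.mpr hs, by rwa [card_singleton]⟩

lemma distToSet_blockComplex_le {w : StdSimplex ℝ S} {i : ι} (hw : w.weights.support ⊆ T i)
    (hk : k i ≤ #(T i)) :
    distToSet w.weights (realization (blockComplex T k)) ≤ 1 - k i / #(T i) := by
  rcases (k i).eq_zero_or_pos with hzero | hpos
  · simpa [hzero] using distToSet_realization_le_one w (blockComplex T k)
  · obtain ⟨G, hG, hcard, hle⟩ := exists_subset_card_eq_div_card_le_sum_weights hw hpos hk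
    have face : G ∈ blockComplex T k := ⟨i, card_pos.mp (hcard ▸ hpos), hG, hcard.le⟩
    have block_nonempty : (T i).Nonempty := card_pos.mp (hpos.trans_le hk)
    exact ((isSimplicialComplex_blockComplex block_nonempty hpos).distToSet_realization_le
      face w).trans (sub_le_sub_left hle 1)

lemma card_inter_le_of_mem_blockComplex [DecidableEq S] (hd : Pairwise (Disjoint on T))
    {G : Finset S} (hG : G ∈ blockComplex T k) (i : ι) : #(G ∩ T i) ≤ k i := by
  obtain ⟨j, _, hsub, hcard⟩ := hG
  rcases eq_or_ne j i with rfl | hji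
  · exact (card_le_card inter_subset_left).trans hcard
  · simp [disjoint_iff_inter_eq_empty.mp ((hd hji).mono_left hsub)]

lemma le_distToSet_uniformStdSimplex_blockComplex (hd : Pairwise (Disjoint on T))
    (hK : IsSimplicialComplex (blockComplex T k)) {i : ι} (hT : (T i).Nonempty) :
    1 - (k i / #(T i) : ℝ) ≤
      distToSet (uniformStdSimplex (T i) hT).weights (realization (blockComplex T k)) := by
  classical
  refine hK.one_sub_le_distToSet_realization fun G hG => ?_
  rw [sum_weights_uniformStdSimplex]
  gcongr
  exact card_inter_le_of_mem_blockComplex hd hG i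

theorem hdist_blockComplex (hd : Pairwise (Disjoint on T)) (hT : ∀ i, (T i).Nonempty)
    (hk : ∀ i, k i ≤ #(T i)) (hpos : ∃ i, 0 < k i) :
    hdist (blockComplex T k) (blockComplex T fun i => #(T i)) =
      ⨆ i, (1 - k i / #(T i) : ℝ) := by
  obtain ⟨i₀, hi₀⟩ := hpos
  have : Nonempty ι := ⟨i₀⟩
  have complex := isSimplicialComplex_blockComplex (hT i₀) hi₀
  have gap_nonneg (i : ι) : 0 ≤ (1 - k i / #(T i) : ℝ) :=
    sub_nonneg.mpr (div_le_one_of_le₀ (by exact_mod_cast hk i) (by positivity))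
  have bddAbove : BddAbove (Set.range fun i => (1 - k i / #(T i) : ℝ)) :=
    ⟨1, Set.forall_mem_range.mpr fun i => sub_le_self 1 (by positivity)⟩
  rw [hdist_eq_hdelta_of_subset (blockComplex_mono hk)]
  apply le_antisymm
  · refine hdelta_le (Real.iSup_nonneg gap_nonneg) fun w ⟨i, _, hw, _⟩ => ?_
    exact (distToSet_blockComplex_le hw (hk i)).trans (le_ciSup bddAbove i)
  · refine ciSup_le fun i => ?_
    have hsub := support_uniformStdSimplex_subset (hT i)
    exact (le_distToSet_uniformStdSimplex_blockComplex hd complex (hT i)).trans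
      (distToSet_le_hdelta
        ⟨i, StdSimplex.support_weights_nonempty _, hsub, card_le_card hsub⟩)

lemma hdist_blockComplex_card_sub {p : ι → ℕ} (hd : Pairwise (Disjoint on T))
    (hT : ∀ i, (T i).Nonempty) (hp : ∀ i, p i ≤ #(T i)) (hlt : ∃ i, p i < #(T i)) :
    hdist (blockComplex T fun i => #(T i) - p i) (blockComplex T fun i => #(T i)) =
      ⨆ i, (p i : ℝ) / #(T i) := by
  rw [hdist_blockComplex hd hT (fun i => Nat.sub_le _ _) (hlt.imp fun i => Nat.sub_pos_of_lt)]
  refine iSup_congr fun i => ?_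
  have card_ne_zero : (#(T i) : ℝ) ≠ 0 := by exact_mod_cast (hT i).card_ne_zero
  rw [Nat.cast_sub (hp i), sub_div, div_self card_ne_zero, sub_sub_cancel]

end BlockComplex

section Values

lemma exists_pairwise_disjoint_card_eq {S ι : Type*} [Infinite S] [Countable ι] (q : ι → ℕ) :
    ∃ T : ι → Finset S, Pairwise (Disjoint on T) ∧ ∀ i, #(T i) = q i := by
  obtain ⟨f, hf⟩ := Countable.exists_injective_nat (Σ i, Fin (q i))
  let e : (Σ i, Fin (q i)) ↪ S := .trans ⟨f, hf⟩ (Infinite.natEmbedding S)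
  refine ⟨fun i => univ.map ((Embedding.sigmaMk i).trans e), fun i j hij => ?_, fun i => by simp⟩
  simp only [onFun, disjoint_left, Finset.mem_map, mem_univ, true_and]
  rintro _ ⟨a, rfl⟩ ⟨b, hb⟩
  exact hij (congrArg Sigma.fst (e.injective hb)).symm

lemma iSup_floor_mul_div_add_one {a : ℝ} (ha : 0 ≤ a) :
    ⨆ n : ℕ, (⌊a * n⌋₊ : ℝ) / ((n : ℝ) + 1) = a := by
  have ratio_le (n : ℕ) : (⌊a * n⌋₊ : ℝ) / ((n : ℝ) + 1) ≤ a := by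
    rw [div_le_iff₀ (by positivity)]
    linarith [Nat.floor_le (show 0 ≤ a * n by positivity)]
  have limit : Tendsto (fun n : ℕ => (⌊a * n⌋₊ : ℝ) / ((n : ℝ) + 1)) atTop (𝓝 a) := by
    have floor_limit := (tendsto_nat_floor_mul_div_atTop ha).comp tendsto_natCast_atTop_atTop
    have ratio_limit := tendsto_natCast_div_add_atTop (1 : ℝ)
    rw [← mul_one a]
    refine (floor_limit.mul ratio_limit).congr' ?_
    filter_upwards [eventually_ne_atTop 0] with n hn
    simp [hn, div_mul_div_cancel₀]
  exact le_antisymm (ciSup_le ratio_le)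
    (le_of_tendsto' limit fun n => le_ciSup ⟨a, Set.forall_mem_range.mpr ratio_le⟩ n)

theorem exists_hdist_eq {S : Type*} [Infinite S] {a : ℝ} (ha₀ : 0 ≤ a) (ha₁ : a ≤ 1) :
    ∃ K₁ K₂ : Set (Finset S), IsSimplicialComplex K₁ ∧ IsSimplicialComplex K₂ ∧ K₁ ⊆ K₂ ∧
      hdist K₁ K₂ = a := by
  obtain ⟨T, hd, hcard⟩ := exists_pairwise_disjoint_card_eq (S := S) fun n : ℕ => n + 1
  have nonempty (n : ℕ) : (T n).Nonempty := card_pos.mp (hcard n ▸ n.succ_pos)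
  have floor_lt (n : ℕ) : ⌊a * n⌋₊ < #(T n) := by
    rw [hcard, Nat.lt_succ_iff]
    exact Nat.floor_le_of_le (mul_le_of_le_one_left n.cast_nonneg ha₁)
  refine ⟨blockComplex T fun n => #(T n) - ⌊a * n⌋₊, blockComplex T fun n => #(T n),
    isSimplicialComplex_blockComplex (nonempty 0) (Nat.sub_pos_of_lt (floor_lt 0)),
    isSimplicialComplex_blockComplex (nonempty 0) (nonempty 0).card_pos,
    blockComplex_mono fun n => Nat.sub_le _ _, ?_⟩
  rw [hdist_blockComplex_card_sub hd nonempty (fun n => (floor_lt n).le) ⟨0, floor_lt 0⟩]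
  simpa only [hcard, Nat.cast_add_one] using iSup_floor_mul_div_add_one ha₀

end Values

theorem stmt12_general {S ι : Type*} :
    (Infinite S → ∀ a : ℝ, 0 ≤ a → a ≤ 1 → ∃ K₁ K₂ : Set (Finset S),
      IsSimplicialComplex K₁ ∧ IsSimplicialComplex K₂ ∧ K₁ ⊆ K₂ ∧ hdist K₁ K₂ = a) ∧
    ∀ (T : ι → Finset S) (p q : ι → ℕ), Pairwise (Disjoint on T) →
      (∀ i, #(T i) = q i) → (∀ i, 0 < q i) → (∀ i, p i ≤ q i) → (∃ i, p i < q i) →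
      hdist {F : Finset S | ∃ i, F.Nonempty ∧ F ⊆ T i ∧ #F ≤ q i - p i}
          {F : Finset S | ∃ i, F.Nonempty ∧ F ⊆ T i} =
        ⨆ i, (p i : ℝ) / q i := by
  refine ⟨fun _ a => exists_hdist_eq, fun T p q hd hq hpos hp hlt => ?_⟩
  obtain rfl : (fun i => #(T i)) = q := funext hq
  rw [← blockComplex_card]
  exact hdist_blockComplex_card_sub hd (fun i => card_pos.mp (hpos i)) hp hlt

/-- Over an infinite vertex set, the Hausdorff distance takes every value in
`[0,1]` on pairs of nested simplicial complexes; concretely, for pairwise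
disjoint finite sets `Sₙ` with `|Sₙ| = qₙ` and `1 ≤ pₙ < qₙ`, the complexes
`⋃ₙ 𝒫*_{≤ qₙ-pₙ}(Sₙ) ⊆ ⋃ₙ 𝒫*_f(Sₙ)` are at distance `supₙ pₙ/qₙ`. -/
theorem stmt12 {S : Type*} [Infinite S] :
    (∀ a : ℝ, 0 ≤ a → a ≤ 1 → ∃ K₁ K₂ : Set (Finset S),
      IsSimplicialComplex K₁ ∧ IsSimplicialComplex K₂ ∧ K₁ ⊆ K₂ ∧
        hdist K₁ K₂ = a) ∧
    (∀ (Sn : ℕ → Finset S) (p q : ℕ → ℕ),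
      (∀ m n, m ≠ n → Disjoint (Sn m) (Sn n)) →
      (∀ n, (Sn n).card = q n) → (∀ n, 1 ≤ p n) → (∀ n, p n < q n) →
      hdist {F : Finset S | ∃ n, F.Nonempty ∧ F ⊆ Sn n ∧ F.card ≤ q n - p n}
          {F : Finset S | ∃ n, F.Nonempty ∧ F ⊆ Sn n} =
        ⨆ n, (p n : ℝ) / q n) := by
  obtain ⟨values, blocks⟩ := stmt12_general (S := S) (ι := ℕ)
  exact ⟨values inferInstance, fun Sn p q hd hq _ hpq => blocks Sn p q hd hq
    (fun n => Nat.zero_lt_of_lt (hpq n)) (fun n => (hpq n).le) ⟨0, hpq 0⟩⟩
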